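/- arXiv:1805.12345 — 3 statements merged into one kernel-verified Lean document; each statement's English description precedes it below -/
import Mathlib

section
/- Let q be a prime power and n an odd positive integer with gcd(n,q)=1. Let r ≥ 4 with (r+2) dividing gcd(n, q+1) and gcd(n/(r+2), r+2) = 1; set ρ = n/(r+2). Let ξ be a primitive n-th root of unity in the splitting field of x^n - 1 over F_q, let α = ξ^ρ (a primitive (r+2)-th root of unity satisfying α^{q+1} = 1), let a, b be integers with aρ + b(r+2) = 1, and let γ = α^a. Then the polynomial g(x) = (x-1)(x^ρ - α)(x^ρ - α^{-1})(x - γ^2)(x - γ^{-2}) has all its coefficients in F_q. -/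
open Polynomial

/-- An element of an extension of a finite field `F` that is fixed by `x ↦ x ^ #F` lies in `F`. -/
theorem FiniteField.mem_range_algebraMap_of_pow_card_eq {F K : Type*} [Field F] [Fintype F]
    [Field K] [Algebra F K] {x : K} (hx : x ^ Fintype.card F = x) :
    x ∈ Set.range (algebraMap F K) := by
  have hsplits : (X ^ Fintype.card F - X : F[X]).Splits := by
    simpa using (FiniteField.isSplittingField_sub F F).splits
  exact hsplits.mem_range_of_isRoot (FiniteField.X_pow_card_sub_X_ne_zero F Fintype.one_lt_card)
    (by simp [hx])

/-- If `β ^ (#F + 1) = 1`, then `β + β⁻¹` lies in `F`. -/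
theorem FiniteField.add_inv_mem_range_algebraMap {F K : Type*} [Field F] [Fintype F]
    [Field K] [Algebra F K] {β : K} (hβ : β ^ (Fintype.card F + 1) = 1) :
    β + β⁻¹ ∈ Set.range (algebraMap F K) := by
  have hinv : β ^ Fintype.card F = β⁻¹ := eq_inv_of_mul_eq_one_left (by rw [← pow_succ, hβ])
  apply FiniteField.mem_range_algebraMap_of_pow_card_eq
  have h := map_add (FiniteField.frobeniusAlgHom F K) β β⁻¹
  simp only [FiniteField.frobeniusAlgHom_apply] at h
  rw [h, inv_pow, hinv, inv_inv, add_comm]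

/-- If `β ^ (#F + 1) = 1`, then `(X ^ m - β) (X ^ m - β⁻¹)` is defined over `F`. -/
theorem FiniteField.X_pow_sub_C_mul_X_pow_sub_C_inv_mem_lifts {F K : Type*} [Field F] [Fintype F]
    [Field K] [Algebra F K] {β : K} (hβ : β ^ (Fintype.card F + 1) = 1) (m : ℕ) :
    (X ^ m - C β) * (X ^ m - C β⁻¹) ∈ lifts (algebraMap F K) := by
  obtain ⟨c, hc⟩ := FiniteField.add_inv_mem_range_algebraMap hβ
  have hβ0 : β ≠ 0 := by
    rintro rfl
    simp at hβ
  have hC : (C β * C β⁻¹ : K[X]) = 1 := by rw [← C_mul, mul_inv_cancel₀ hβ0, C_1]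
  rw [mem_lifts]
  refine ⟨X ^ m * X ^ m - C c * X ^ m + 1, ?_⟩
  simp only [Polynomial.map_add, Polynomial.map_sub, Polynomial.map_mul, Polynomial.map_pow,
    map_X, map_C, Polynomial.map_one, hc, C_add]
  linear_combination -hC

/-- In the setting of Theorem 4: `n` odd, `gcd(n,q) = 1`, `r ≥ 4`, `(r+2) ∣ gcd(n, q+1)`,
`gcd(n/(r+2), r+2) = 1`, `ρ = n/(r+2)`, `ξ` a primitive `n`-th root of unity in the
splitting field of `X^n - 1` over `F_q`, `α = ξ^ρ`, `aρ + b(r+2) = 1`, `γ = α^a`, the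
polynomial `g(x) = (x-1)(x^ρ - α)(x^ρ - α⁻¹)(x - γ²)(x - γ⁻²)` has all its coefficients
in `F_q` (i.e. in the image of `F_q` in the splitting field). -/
theorem generator_coeffs_in_base_field (F K : Type*) [Field F] [Fintype F]
    [Field K] [Algebra F K]
    (q n r : ℕ) (hq : Fintype.card F = q) (hn : 0 < n) (hodd : Odd n)
    (hcop : Nat.Coprime n q)
    (hr : 4 ≤ r) (hdvd : (r + 2) ∣ Nat.gcd n (q + 1))
    (ρ : ℕ) (hρ : ρ = n / (r + 2))
    (hgcd : Nat.gcd ρ (r + 2) = 1)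
    (ξ : K) (hξ : IsPrimitiveRoot ξ n) (α : K) (hα : α = ξ ^ ρ)
    (a b : ℤ) (hab : a * (ρ : ℤ) + b * ((r : ℤ) + 2) = 1)
    (γ : K) (hγ : γ = α ^ a) :
    ∀ i : ℕ,
      ((X - 1) * (X ^ ρ - C α) * (X ^ ρ - C α⁻¹)
        * (X - C (γ ^ 2)) * (X - C (γ ^ (-2 : ℤ)))).coeff i
        ∈ Set.range (algebraMap F K) := by
  have hα1 : α ^ (Fintype.card F + 1) = 1 := by
    obtain ⟨k, hk⟩ := hdvd.trans (Nat.gcd_dvd_right n (q + 1))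
    have hρn : ρ * (r + 2) = n := by
      rw [hρ, Nat.div_mul_cancel (hdvd.trans (Nat.gcd_dvd_left n (q + 1)))]
    rw [hq, hk, hα, ← pow_mul, ← mul_assoc, hρn, pow_mul, hξ.pow_eq_one, one_pow]
  have hγ1 : (γ ^ 2) ^ (Fintype.card F + 1) = 1 := by
    rw [pow_right_comm, hγ, ← zpow_natCast (α ^ a), zpow_comm, zpow_natCast, hα1, one_zpow,
      one_pow]
  have hfac := FiniteField.X_pow_sub_C_mul_X_pow_sub_C_inv_mem_lifts hα1 ρ
  have hfac' := FiniteField.X_pow_sub_C_mul_X_pow_sub_C_inv_mem_lifts hγ1 1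
  have hlin : (X - 1 : K[X]) ∈ lifts (algebraMap F K) :=
    (mem_lifts _).mpr ⟨X - 1, by simp⟩
  have hγinv : γ ^ (-2 : ℤ) = (γ ^ 2)⁻¹ := by
    rw [zpow_neg, zpow_ofNat]
  have hg := mul_mem (mul_mem hlin hfac) hfac'
  rw [pow_one, ← mul_assoc, ← mul_assoc, ← hγinv] at hg
  exact (lifts_iff_coeff_lifts _).mp hg
end

section
/- Let q be a prime power and n an odd positive integer with gcd(n,q)=1. Let r ≥ 4 with (r+2) dividing gcd(n, q+1) and gcd(n/(r+2), r+2) = 1; set ρ = n/(r+2). Let ξ be a primitive n-th root of unity in the splitting field of x^n - 1 over F_q, let α = ξ^ρ (a primitive (r+2)-th root of unity satisfying α^{q+1} = 1), let a, b be integers with aρ + b(r+2) = 1, and let γ = α^a. Then no nonzero polynomial c(x) ∈ F_q[x] of degree less than n having at most 5 nonzero coefficients is divisible by g(x) = (x-1)(x^ρ - α)(x^ρ - α^{-1})(x - γ^2)(x - γ^{-2}); equivalently, the q-ary cyclic code with generator polynomial g(x) has minimum distance at least 6. -/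
open Polynomial

/-- Vandermonde: if the power sums of distinct values `v i`, weighted by `b i`, vanish for all
exponents below the number of values, then all the weights vanish. -/
theorem eq_zero_of_sum_mul_pow_eq_zero {ι K : Type*} [Field K] (S : Finset ι) (v b : ι → K)
    (hinj : Set.InjOn v S) (h : ∀ k < S.card, ∑ i ∈ S, b i * v i ^ k = 0) :
    ∀ i ∈ S, b i = 0 := by
  classical
  intro i hi
  have key : ∀ f : K[X], f.natDegree < S.card → ∑ j ∈ S, b j * f.eval (v j) = 0 := by
    intro f hf
    simp_rw [Polynomial.eval_eq_sum_range, Finset.mul_sum]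
    rw [Finset.sum_comm]
    refine Finset.sum_eq_zero fun k hk => ?_
    have hk' : k < S.card := by
      have := Finset.mem_range.mp hk
      omega
    calc ∑ j ∈ S, b j * (f.coeff k * v j ^ k) = f.coeff k * ∑ j ∈ S, b j * v j ^ k := by
          rw [Finset.mul_sum]
          exact Finset.sum_congr rfl fun j _ => by ring
      _ = 0 := by rw [h k hk', mul_zero]
  have hprod := key (∏ j ∈ S.erase i, (X - C (v j))) (by
    rw [natDegree_finsetProd_X_sub_C_eq_card, Finset.card_erase_of_mem hi]
    have := Finset.card_pos.mpr ⟨i, hi⟩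
    omega)
  rw [Finset.sum_eq_single_of_mem i hi] at hprod
  · refine (mul_eq_zero.mp hprod).resolve_right ?_
    rw [eval_prod]
    refine Finset.prod_ne_zero_iff.mpr ?_
    intro j hj
    rw [Finset.mem_erase] at hj
    simpa [sub_eq_zero] using fun e => hj.1 (hinj hj.2 hi e.symm)
  · intro j hj hji
    rw [eval_prod, Finset.prod_eq_zero (Finset.mem_erase.mpr ⟨hji, hj⟩) (by simp), mul_zero]

/-- If `X ^ m - δ ^ m` divides `p`, then every part of `p` supported on a residue class
modulo `m` vanishes at `δ`. -/
theorem sum_residue_class_eq_zero {K : Type*} [Field K] {m : ℕ} {δ : K} {p : K[X]}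
    (h : X ^ m - C (δ ^ m) ∣ p) (t : ℕ) :
    ∑ i ∈ p.support with i % m = t, p.coeff i * δ ^ i = 0 := by
  let φ : K[X] →ₗ[K] K := Polynomial.lsum fun i =>
    if i % m = t then LinearMap.mulRight K (δ ^ i) else 0
  have hφ : ∀ i x, φ (monomial i x) = if i % m = t then x * δ ^ i else 0 := by
    intro i x
    simp only [φ, Polynomial.lsum_apply]
    rw [Polynomial.sum_monomial_index _ _ (LinearMap.map_zero _)]
    split_ifs <;> simp
  have hmul : ∀ s : K[X], φ ((X ^ m - C (δ ^ m)) * s) = 0 := by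
    intro s
    induction s using Polynomial.induction_on' with
    | add s s' hs hs' => rw [mul_add, map_add, hs, hs', add_zero]
    | monomial i x =>
      rw [sub_mul, X_pow_mul_monomial, C_mul_monomial, map_sub, hφ, hφ, Nat.add_mod_right]
      split_ifs
      · rw [pow_add]
        ring
      · exact sub_zero 0
  obtain ⟨s, rfl⟩ := h
  have hsum := hmul s
  generalize (X ^ m - C (δ ^ m)) * s = p at hsum ⊢
  rw [p.as_sum_support, map_sum] at hsum
  rw [Finset.sum_filter]
  exact (Finset.sum_congr rfl fun i _ => (hφ i _).symm).trans hsum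

/-- The Claim of Theorem 4: with `n` odd, `gcd(n,q) = 1`, `r ≥ 4`, `(r+2) ∣ gcd(n, q+1)`,
`gcd(n/(r+2), r+2) = 1`, `ρ = n/(r+2)`, `ξ` a primitive `n`-th root of unity, `α = ξ^ρ`,
`aρ + b(r+2) = 1` and `γ = α^a`, no nonzero polynomial `c(x) ∈ F_q[x]` of degree `< n`
with at most `5` nonzero coefficients is divisible by
`g(x) = (x-1)(x^ρ - α)(x^ρ - α⁻¹)(x - γ²)(x - γ⁻²)`; equivalently, the `q`-ary cyclic
code with generator polynomial `g` has minimum distance at least `6`. -/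
theorem min_dist_ge_six (F K : Type*) [Field F] [Fintype F] [Field K] [Algebra F K]
    (q n r : ℕ) (hq : Fintype.card F = q) (hn : 0 < n) (hodd : Odd n)
    (hcop : Nat.Coprime n q)
    (hr : 4 ≤ r) (hdvd : (r + 2) ∣ Nat.gcd n (q + 1))
    (ρ : ℕ) (hρ : ρ = n / (r + 2))
    (hgcd : Nat.gcd ρ (r + 2) = 1)
    (ξ : K) (hξ : IsPrimitiveRoot ξ n) (α : K) (hα : α = ξ ^ ρ)
    (a b : ℤ) (hab : a * (ρ : ℤ) + b * ((r : ℤ) + 2) = 1)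
    (γ : K) (hγ : γ = α ^ a) :
    ∀ c : F[X], c ≠ 0 → c.natDegree < n → c.support.card ≤ 5 →
      ¬ ((X - 1) * (X ^ ρ - C α) * (X ^ ρ - C α⁻¹)
          * (X - C (γ ^ 2)) * (X - C (γ ^ (-2 : ℤ)))
          ∣ c.map (algebraMap F K)) := by
  intro c hc hdeg hcard hdiv
  obtain ⟨hmn, -⟩ := Nat.dvd_gcd_iff.mp hdvd
  have hnρ : n = ρ * (r + 2) := by rw [hρ, Nat.div_mul_cancel hmn]
  have hα' : IsPrimitiveRoot α (r + 2) := hα ▸ hξ.pow hn hnρ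
  have hα0 : α ≠ 0 := hα'.ne_zero (by omega)
  have hγ0 : γ ≠ 0 := hγ ▸ zpow_ne_zero a hα0
  have hγρ : γ ^ ρ = α := by
    have hb : α ^ (b * ((r : ℤ) + 2)) = 1 := by
      rw [mul_comm, zpow_mul]
      have : α ^ ((r : ℤ) + 2) = 1 := mod_cast hα'.pow_eq_one
      rw [this, one_zpow]
    calc γ ^ ρ = α ^ (a * (ρ : ℤ)) * α ^ (b * ((r : ℤ) + 2)) := by
          rw [hb, mul_one, hγ, zpow_mul, zpow_natCast]
      _ = α := by rw [← zpow_add₀ hα0, hab, zpow_one]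
  have hγinj : ∀ i j : ℕ, γ ^ i = γ ^ j → i ≡ j [MOD r + 2] := by
    intro i j hij
    rw [hα'.eq_orderOf, ← (hα'.isOfFinOrder (by omega)).pow_eq_pow_iff_modEq, ← hγρ, ← pow_mul,
      ← pow_mul, mul_comm ρ i, mul_comm ρ j, pow_mul, pow_mul, hij]
  have hmodd : Odd (r + 2) := hodd.of_dvd_nat hmn
  set p := c.map (algebraMap F K)
  have hsupp : p.support = c.support := support_map_of_injective c (algebraMap F K).injective
  have hlt : ∀ i ∈ p.support, i < n := fun i hi =>
    (le_natDegree_of_mem_supp i (hsupp ▸ hi)).trans_lt hdeg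
  -- exponents in one residue class modulo `ρ` are separated by their residues modulo `r + 2`
  have hcrt : ∀ i ∈ p.support, ∀ j ∈ p.support, i % ρ = j % ρ → i ≡ j [MOD r + 2] → i = j := by
    intro i hi j hj hij hij'
    have hmod : i ≡ j [MOD n] := by
      rw [hnρ]
      exact (Nat.modEq_and_modEq_iff_modEq_mul hgcd).mp ⟨hij, hij'⟩
    exact hmod.eq_of_lt_of_lt (hlt i hi) (hlt j hj)
  have hd : ∀ f : K[X], f ∣ (X - 1) * (X ^ ρ - C α) * (X ^ ρ - C α⁻¹)
      * (X - C (γ ^ 2)) * (X - C (γ ^ (-2 : ℤ))) → f ∣ p := fun f hf => hf.trans hdiv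
  have hdα : X ^ ρ - C (γ ^ ρ) ∣ p := hd _ <| by
    rw [hγρ]
    exact Dvd.intro_left _ rfl |>.mul_right _ |>.mul_right _ |>.mul_right _
  have hdα' : X ^ ρ - C (γ⁻¹ ^ ρ) ∣ p := hd _ <| by
    rw [inv_pow, hγρ]
    exact Dvd.intro_left _ rfl |>.mul_right _ |>.mul_right _
  -- each nonempty residue class modulo `ρ` meets the support in at least three exponents
  have hthree : ∀ i ∈ p.support, 3 ≤ (p.support.filter fun j => j % ρ = i % ρ).card := by
    intro i hi
    by_contra! hlt3
    have hzero := eq_zero_of_sum_mul_pow_eq_zero (p.support.filter fun j => j % ρ = i % ρ)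
      (fun j => γ ^ (2 * j)) (fun j => p.coeff j * γ⁻¹ ^ j) ?_ ?_ i (by simpa using hi)
    · exact mul_ne_zero (mem_support_iff.mp hi) (pow_ne_zero _ (inv_ne_zero hγ0)) hzero
    · intro j hj k hk hjk
      obtain ⟨hj, hj'⟩ := Finset.mem_filter.mp hj
      obtain ⟨hk, hk'⟩ := Finset.mem_filter.mp hk
      refine hcrt j hj k hk (hj'.trans hk'.symm) ?_
      exact Nat.ModEq.cancel_left_of_coprime (Nat.coprime_two_right.mpr hmodd) (hγinj _ _ hjk)
    · intro k hk
      have hk2 : k < 2 := by omega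
      interval_cases k
      · simpa using sum_residue_class_eq_zero hdα' (i % ρ)
      · rw [← sum_residue_class_eq_zero hdα (i % ρ)]
        refine Finset.sum_congr rfl fun j _ => ?_
        rw [pow_one, two_mul, pow_add, mul_assoc, ← mul_assoc (γ⁻¹ ^ j), ← mul_pow,
          inv_mul_cancel₀ hγ0, one_pow, one_mul]
  obtain ⟨i, hi⟩ : p.support.Nonempty := by
    rw [hsupp]
    exact support_nonempty.mpr hc
  have hclass : ∀ j ∈ p.support, j % ρ = i % ρ := by
    intro j hj
    by_contra hne
    have hdisj : Disjoint (p.support.filter fun k => k % ρ = j % ρ)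
        (p.support.filter fun k => k % ρ = i % ρ) :=
      Finset.disjoint_filter.mpr fun k _ hkj hki => hne (hkj.symm.trans hki)
    have hle := Finset.card_le_card (Finset.union_subset
      (Finset.filter_subset (fun k => k % ρ = j % ρ) p.support)
      (Finset.filter_subset (fun k => k % ρ = i % ρ) p.support))
    rw [Finset.card_union_of_disjoint hdisj, hsupp] at hle
    have hj3 := hthree j hj
    have hi3 := hthree i hi
    rw [hsupp] at hj3 hi3
    omega
  have heval : ∀ k < 5, p.eval ((γ ^ 2)⁻¹ * γ ^ k) = 0 := by
    have hroot : ∀ x : K, ∀ f : K[X], f ∣ p → f.eval x = 0 → p.eval x = 0 := by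
      rintro x f ⟨s, hs⟩ hx
      rw [hs, eval_mul, hx, zero_mul]
    intro k hk
    interval_cases k
    · refine hroot _ (X - C (γ ^ (-2 : ℤ))) (hd _ (Dvd.intro_left _ rfl)) ?_
      simp [zpow_neg, zpow_ofNat]
    · refine hroot _ _ hdα' ?_
      have : (γ ^ 2)⁻¹ * γ ^ 1 = γ⁻¹ := by field_simp
      rw [this]
      simp
    · refine hroot _ (X - 1) (hd _ ?_) ?_
      · exact dvd_mul_right _ _ |>.mul_right _ |>.mul_right _ |>.mul_right _
      · simp [hγ0]
    · refine hroot _ _ hdα ?_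
      have : (γ ^ 2)⁻¹ * γ ^ 3 = γ := by field_simp
      rw [this]
      simp
    · refine hroot _ (X - C (γ ^ 2)) (hd _ (Dvd.intro_left _ rfl |>.mul_right _)) ?_
      have : (γ ^ 2)⁻¹ * γ ^ 4 = γ ^ 2 := by field_simp
      rw [this]
      simp
  have hzero := eq_zero_of_sum_mul_pow_eq_zero p.support (fun j => γ ^ j)
    (fun j => p.coeff j * (γ ^ 2)⁻¹ ^ j) ?_ ?_ i hi
  · exact mul_ne_zero (mem_support_iff.mp hi)
      (pow_ne_zero _ (inv_ne_zero (pow_ne_zero 2 hγ0))) hzero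
  · intro j hj k hk hjk
    exact hcrt j hj k hk ((hclass j hj).trans (hclass k hk).symm) (hγinj j k hjk)
  · intro k hk
    rw [← heval k (by rw [hsupp] at hk; omega), eval_eq_sum, Polynomial.sum_def]
    refine Finset.sum_congr rfl fun j _ => ?_
    rw [mul_pow, ← pow_mul, ← pow_mul γ k j, mul_comm k j, mul_assoc]
end

section
/- Let q be a prime power and n an odd positive integer with gcd(n,q)=1, let r ≥ 4 with (r+2) | n, and set ρ = n/(r+2). Let ξ be a primitive n-th root of unity in the splitting field of x^n - 1 over F_q. Suppose c(x) = Σ_{j=0}^{4} c_j x^{k_j} with c_j ∈ F_q, 0 = k_0 < k_1 < k_2 < k_3 < k_4 < n, and suppose that c(ξ^{1 + i(r+2)}) = 0 for all i = 0, 1, ..., ρ-1. If none of k_1, k_2, k_3, k_4 is divisible by ρ, then c_0 = 0. -/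
open Polynomial

/-- The `k`-th power sum over all `ρ`-th roots of unity vanishes unless `ρ ∣ k`. -/
theorem IsPrimitiveRoot.sum_range_pow_mul_eq_zero {R : Type*} [CommRing R] [IsDomain R]
    {η : R} {ρ k : ℕ} (hη : IsPrimitiveRoot η ρ) (hk : ¬ ρ ∣ k) :
    ∑ i ∈ Finset.range ρ, η ^ (i * k) = 0 := by
  have hne : η ^ k - 1 ≠ 0 := fun h => hk (hη.dvd_of_pow_eq_one k (sub_eq_zero.mp h))
  refine (mul_eq_zero.mp ?_).resolve_right hne
  have hgeom := geom_sum_mul (η ^ k) ρ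
  simp only [← pow_mul, mul_comm k] at hgeom
  rw [hgeom, pow_mul, hη.pow_eq_one, one_pow, sub_self]

/-- Case (i) in the proof of the Claim of Theorem 4: with `ρ = n/(r+2)` and `ξ` a
primitive `n`-th root of unity, if `c(x) = ∑_{j=0}^{4} c_j x^{k_j}` with `c_j ∈ F_q`,
`0 = k_0 < k_1 < k_2 < k_3 < k_4 < n`, vanishes at `ξ^{1 + i(r+2)}` for all
`i = 0, 1, ..., ρ-1`, and none of `k_1, k_2, k_3, k_4` is divisible by `ρ`, then
`c_0 = 0`. -/
theorem coeff_zero_of_no_index_div (F K : Type*) [Field F] [Fintype F] [Field K] [Algebra F K]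
    (q n r : ℕ) (hq : Fintype.card F = q) (hn : 0 < n) (hodd : Odd n)
    (hcop : Nat.Coprime n q)
    (hr : 4 ≤ r) (hdvd : (r + 2) ∣ n)
    (ρ : ℕ) (hρ : ρ = n / (r + 2))
    (ξ : K) (hξ : IsPrimitiveRoot ξ n)
    (c : Fin 5 → F) (k : Fin 5 → ℕ)
    (hk0 : k 0 = 0) (hkmono : StrictMono k) (hkn : k 4 < n)
    (hroot : ∀ i : ℕ, i < ρ →
      ∑ j : Fin 5, algebraMap F K (c j) * ξ ^ ((1 + i * (r + 2)) * k j) = 0)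
    (hndvd : ∀ j : Fin 5, j ≠ 0 → ¬ ρ ∣ k j) :
    c 0 = 0 := by
  have hnρ : n = (r + 2) * ρ := by rw [hρ, Nat.mul_div_cancel' hdvd]
  have hη : IsPrimitiveRoot (ξ ^ (r + 2)) ρ := hξ.pow hn hnρ
  have hF : ((n : ℕ) : F) ≠ 0 := by
    intro h
    have hq0 : (q : F) = 0 := by rw [← hq, FiniteField.cast_card_eq_zero]
    have hbez := (Nat.isCoprime_iff_coprime.mpr hcop).map (Int.castRingHom F)
    simp [h, hq0] at hbez
  have hρF : (ρ : F) ≠ 0 := fun h => hF (by rw [hnρ, Nat.cast_mul, h, mul_zero])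
  have hsum : ∀ j : Fin 5, j ≠ 0 →
      ∑ i ∈ Finset.range ρ, algebraMap F K (c j) * ξ ^ ((1 + i * (r + 2)) * k j) = 0 := by
    intro j hj
    calc ∑ i ∈ Finset.range ρ, algebraMap F K (c j) * ξ ^ ((1 + i * (r + 2)) * k j)
        = algebraMap F K (c j) * ξ ^ k j *
            ∑ i ∈ Finset.range ρ, (ξ ^ (r + 2)) ^ (i * k j) := by
          rw [Finset.mul_sum]
          refine Finset.sum_congr rfl fun i _ => ?_
          rw [← pow_mul, mul_assoc, ← pow_add]
          ring_nf
      _ = 0 := by rw [hη.sum_range_pow_mul_eq_zero (hndvd j hj), mul_zero]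
  have htotal : ∑ i ∈ Finset.range ρ,
      ∑ j : Fin 5, algebraMap F K (c j) * ξ ^ ((1 + i * (r + 2)) * k j) = 0 :=
    Finset.sum_eq_zero fun i hi => hroot i (Finset.mem_range.mp hi)
  rw [Finset.sum_comm, Finset.sum_eq_single 0 (fun j _ => hsum j) (by simp)] at htotal
  have hmul : algebraMap F K (ρ * c 0) = 0 := by simpa [hk0] using htotal
  rw [map_eq_zero] at hmul
  exact (mul_eq_zero.mp hmul).resolve_left hρF
end
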